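/- There exists an absolute constant c > 0 such that for every finite set A ⊆ ℝ \ {0} with |A| ≥ 2, one has |AA + AA| ≥ c·|A|^(5/4)·|A:A|^(1/3). -/

import Mathlib

open Finset
open scoped Pointwise

/-!
Represent each ratio `m ∈ A / A` by a vector `(a, a * m)` of slope `m` in `A × A`, and let `B` be
the larger of the positive and negative parts of `A`. Cut the slopes, in increasing order, into
clusters of two adjacent blocks of length `h`. A sum of two vectors, one from each block of a
cluster, dilated by factors `x, y ∈ B`, lies in `(A * A + A * A) × (A * A + A * A)`. Once the
first coordinates of the vectors also share a sign, its slope lies between those of the two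
vectors, so distinct clusters produce disjoint sets of sums.

Within a cluster, a coincidence between two such sums reduces, by eliminating one of the four
vectors, to an equation `z = α * x + β * y` with `x, y, z ∈ B`. Its solutions number `O(r * #B)`
with `r ≈ #(A / A) ^ (2 / 3)`: dividing `y` by an arbitrary element of `B` turns them into
incidences between `#B ^ 2` lines and the grid `(B / B) × B`, and in an `r × r` partition of this
grid a line, being monotone, meets at most `2 * r` cells, while a pair of points in one cell lies
on at most one line. Taking `h ≈ (#B / r) ^ (1 / 2)` leaves at least `h ^ 2 * #B ^ 2 / 2` distinct
sums in each cluster.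
-/

section Collisions

variable {α β : Type*} [DecidableEq β]

/-- The ordered pairs of distinct elements of `s` that `f` identifies. -/
def collisions (s : Finset α) (f : α → β) : Finset (α × α) := {p ∈ s.offDiag | f p.1 = f p.2}

lemma mem_collisions {s : Finset α} {f : α → β} {a b : α} :
    (a, b) ∈ collisions s f ↔ a ∈ s ∧ b ∈ s ∧ a ≠ b ∧ f a = f b := by
  simp only [collisions, mem_filter, mem_offDiag, and_assoc]

lemma card_le_card_image_add_card_collisions (s : Finset α) (f : α → β) :
    #s ≤ #(s.image f) + #(collisions s f) := by
  classical
  obtain ⟨t, hts, hinj, himage⟩ :=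
    exists_subset_injOn_image_eq_of_surjOn (f := f) s (s.image f) (by simp [Set.SurjOn])
  have hrep : ∀ a ∈ s, ∃ b ∈ t, f b = f a := fun a ha ↦
    mem_image.mp (himage ▸ mem_image_of_mem f ha)
  choose! g hgt hfg using hrep
  have hcollide : #(s \ t) ≤ #(collisions s f) := by
    refine card_le_card_of_injOn (fun a ↦ (a, g a)) (fun a ha ↦ ?_)
      (fun a _ b _ hab ↦ congrArg Prod.fst hab)
    obtain ⟨has, hat⟩ := mem_sdiff.mp ha
    exact mem_collisions.mpr
      ⟨has, hts (hgt a has), fun h ↦ hat (h ▸ hgt a has), (hfg a has).symm⟩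
  rw [← himage, card_image_of_injOn hinj, ← card_sdiff_add_card_eq_card hts]
  lia

end Collisions

section Blocks

variable {α : Type*}

/-- The pairs of points of `P` lying in the same cell, a cell being a fibre of `f`. -/
def cellPairs (P : Finset α) (f : α → ℕ) : Finset (α × α) := {p ∈ P ×ˢ P | f p.1 = f p.2}

variable [LinearOrder α]

/-- The number of elements of `P` below `s`. On `P` itself this is the position of `s` in the
increasing enumeration of `P`, counted from `0`. -/
def rankIn (P : Finset α) (s : α) : ℕ := #{x ∈ P | x < s}

lemma rankIn_mono (P : Finset α) : Monotone (rankIn P) := fun _ _ h ↦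
  card_le_card (monotone_filter_right P fun _ _ hx ↦ hx.trans_le h)

lemma rankIn_lt_rankIn {P : Finset α} {s t : α} (hs : s ∈ P) (h : s < t) :
    rankIn P s < rankIn P t :=
  card_lt_card <| (ssubset_iff_of_subset
    (monotone_filter_right P fun _ _ hx ↦ hx.trans h)).mpr ⟨s, by simp [hs, h], by simp⟩

lemma rankIn_lt_card {P : Finset α} {s : α} (hs : s ∈ P) : rankIn P s < #P :=
  card_lt_card (filter_ssubset.mpr ⟨s, hs, lt_irrefl s⟩)

lemma rankIn_injOn (P : Finset α) : Set.InjOn (rankIn P) P := by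
  intro s hs t ht hst
  by_contra hne
  rcases lt_or_gt_of_ne hne with h | h
  · exact (rankIn_lt_rankIn hs h).ne hst
  · exact (rankIn_lt_rankIn ht h).ne' hst

lemma image_rankIn (P : Finset α) : P.image (rankIn P) = range #P :=
  eq_of_subset_of_card_le
    (image_subset_iff.mpr fun _ hs ↦ mem_range.mpr (rankIn_lt_card hs))
    (by rw [card_range, card_image_of_injOn (rankIn_injOn P)])

/-- The `c`-th block, counted from `0`, when the increasing enumeration of `P` is cut into
consecutive blocks of length `h`; the last nonempty block may be shorter. -/
def block (P : Finset α) (h c : ℕ) : Finset α := {s ∈ P | rankIn P s / h = c}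

lemma block_subset (P : Finset α) (h c : ℕ) : block P h c ⊆ P := filter_subset _ _

lemma lt_of_mem_block {P : Finset α} {h c d : ℕ} (hcd : c < d) {s t : α}
    (hs : s ∈ block P h c) (ht : t ∈ block P h d) : s < t := by
  rw [block, mem_filter] at hs ht
  by_contra! hts
  have := Nat.div_le_div_right (c := h) (rankIn_mono P hts)
  lia

lemma card_block_eq_card_filter_range (P : Finset α) (h c : ℕ) :
    #(block P h c) = #{k ∈ range #P | k / h = c} := by
  rw [← image_rankIn, filter_image,
    card_image_of_injOn ((rankIn_injOn P).mono (filter_subset _ _)), block]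

lemma card_block_le (P : Finset α) {h : ℕ} (hh : 0 < h) (c : ℕ) : #(block P h c) ≤ h := by
  have hsub : {k ∈ range #P | k / h = c} ⊆ Ico (c * h) (c * h + h) := by
    intro k hk
    obtain ⟨-, hk⟩ := mem_filter.mp hk
    rw [Nat.div_eq_iff hh] at hk
    rw [mem_Ico]
    lia
  simpa [card_block_eq_card_filter_range] using card_le_card hsub

lemma card_block {P : Finset α} {h c : ℕ} (hh : 0 < h) (hc : (c + 1) * h ≤ #P) :
    #(block P h c) = h := by
  refine (card_block_le P hh c).antisymm ?_
  have hsub : Ico (c * h) (c * h + h) ⊆ {k ∈ range #P | k / h = c} := by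
    intro k hk
    rw [mem_Ico] at hk
    rw [mem_filter, mem_range, Nat.div_eq_iff hh]
    lia
  simpa [card_block_eq_card_filter_range] using card_le_card hsub

lemma card_cellPairs_rankIn_div_le (P : Finset α) {h : ℕ} (hh : 0 < h) :
    #(cellPairs P fun s ↦ rankIn P s / h) ≤ h * #P := by
  refine card_le_mul_card_image_of_maps_to (f := Prod.fst) (fun p hp ↦ ?_) h fun s _ ↦ ?_
  · exact (mem_product.mp (mem_filter.mp hp).1).1
  · refine le_trans ?_ (card_block_le P hh (rankIn P s / h))
    refine card_le_card_of_injOn Prod.snd ?_ ?_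
    · rintro ⟨x, y⟩ hp
      simp only [cellPairs, coe_filter, mem_filter, mem_product, Set.mem_ofPred_eq] at hp
      obtain ⟨⟨⟨-, hy⟩, hxy⟩, rfl⟩ := hp
      exact mem_filter.mpr ⟨hy, hxy.symm⟩
    · rintro ⟨x, y⟩ hp ⟨x', y'⟩ hp' rfl
      simp only [coe_filter, Set.mem_ofPred_eq] at hp hp'
      rw [hp.2, hp'.2]

lemma exists_monotone_card_cellPairs_le {P : Finset α} {r : ℕ} (hr : 0 < r) (hrP : r ≤ #P) :
    ∃ f : α → ℕ, Monotone f ∧ (∀ s ∈ P, f s < r) ∧ #(cellPairs P f) * r ≤ 2 * #P ^ 2 := by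
  set h := #P / r + 1 with hh
  have hcover : #P < r * h := Nat.lt_mul_div_succ _ hr
  have hwidth : h * r ≤ 2 * #P := by
    have := Nat.div_mul_le_self #P r
    rw [hh, add_mul, one_mul]
    lia
  refine ⟨fun s ↦ rankIn P s / h, fun s t hst ↦ Nat.div_le_div_right (rankIn_mono P hst),
    fun s hs ↦ ?_, ?_⟩
  · rw [Nat.div_lt_iff_lt_mul (Nat.succ_pos _)]
    exact (rankIn_lt_card hs).trans hcover
  · calc #(cellPairs P fun s ↦ rankIn P s / h) * r
        ≤ h * #P * r := by gcongr; exact card_cellPairs_rankIn_div_le P (Nat.succ_pos _)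
      _ = h * r * #P := by ring
      _ ≤ 2 * #P * #P := by gcongr
      _ = 2 * #P ^ 2 := by ring

end Blocks

section Incidences

variable {K : Type*} [Field K]

lemma line_eq_of_two_points {l l' p q : K × K} (hpq : p ≠ q)
    (hp : p.2 = l.1 * p.1 + l.2) (hq : q.2 = l.1 * q.1 + l.2)
    (hp' : p.2 = l'.1 * p.1 + l'.2) (hq' : q.2 = l'.1 * q.1 + l'.2) : l = l' := by
  have hne : p.1 - q.1 ≠ 0 := by
    intro h
    have h₁ : p.1 = q.1 := sub_eq_zero.mp h
    exact hpq (Prod.ext h₁ (by rw [hp, hq, h₁]))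
  have hslope : l.1 = l'.1 :=
    mul_right_cancel₀ hne (by linear_combination hp' - hq' - hp + hq)
  exact Prod.ext hslope (by linear_combination hp' - hp - p.1 * hslope)

variable [DecidableEq K]

lemma card_le_card_div_self₀ {A : Finset K} (hA : 0 ∉ A) : #A ≤ #(A / A) := by
  obtain rfl | ⟨a, ha⟩ := A.eq_empty_or_nonempty
  · simp
  · exact card_le_card_of_injOn (· / a) (fun _ hx ↦ div_mem_div hx ha)
      fun _ _ _ _ h ↦ (div_left_inj' (ne_of_mem_of_not_mem ha hA)).mp h

/-- The incidences `((m, c), (s, z))` between the lines `z = m * s + c`, `(m, c) ∈ L`, and the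
points of the grid `P × Q`. -/
def incidences (L : Finset (K × K)) (P Q : Finset K) : Finset ((K × K) × (K × K)) :=
  {v ∈ L ×ˢ (P ×ˢ Q) | v.2.2 = v.1.1 * v.2.1 + v.1.2}

lemma mem_incidences {L : Finset (K × K)} {P Q : Finset K} {l p : K × K} :
    (l, p) ∈ incidences L P Q ↔
      l ∈ L ∧ p.1 ∈ P ∧ p.2 ∈ Q ∧ p.2 = l.1 * p.1 + l.2 := by
  simp only [incidences, mem_filter, mem_product, and_assoc]

/-- The solutions `(x, y, z)` in `B` of the equation `z = α * x + β * y`. -/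
def linearTriples (B : Finset K) (α β : K) : Finset (K × K × K) :=
  {t ∈ B ×ˢ B ×ˢ B | t.2.2 = α * t.1 + β * t.2.1}

-- For each `t ∈ B`, a solution `(x, y, z)` puts the point `(y / t, z)` on the line
-- `z = (β * t) * s + α * x`.
lemma card_mul_card_linearTriples_le_card_incidences {B : Finset K} (hB : 0 ∉ B) {α β : K}
    (hα : α ≠ 0) (hβ : β ≠ 0) :
    #B * #(linearTriples B α β) ≤
      #(incidences ((B ×ˢ B).image (Prod.map (β * ·) (α * ·))) (B / B) B) := by
  rw [← card_product]
  refine card_le_card_of_injOn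
    (fun w ↦ ((β * w.1, α * w.2.1), (w.2.2.1 / w.1, w.2.2.2))) ?_ ?_
  · rintro ⟨t, x, y, z⟩ hw
    simp only [coe_product, linearTriples, Set.mem_prod, mem_coe, mem_filter, mem_product] at hw
    obtain ⟨ht, ⟨hx, hy, hz⟩, hxyz⟩ := hw
    have ht₀ : t ≠ 0 := ne_of_mem_of_not_mem ht hB
    rw [mem_coe, mem_incidences]
    refine ⟨mem_image.mpr ⟨(t, x), mem_product.mpr ⟨ht, hx⟩, rfl⟩, div_mem_div hy ht, hz, ?_⟩
    field_simp
    linear_combination hxyz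
  · rintro ⟨t, x, y, z⟩ hw ⟨t', x', y', z'⟩ - heq
    have ht₀ : t ≠ 0 := ne_of_mem_of_not_mem (mem_product.mp hw).1 hB
    simp only [Prod.mk.injEq, mul_right_inj' hα, mul_right_inj' hβ] at heq
    obtain ⟨⟨rfl, rfl⟩, hy, rfl⟩ := heq
    rw [(div_left_inj' ht₀).mp hy]

end Incidences

section OrderedIncidences

variable {K : Type*} [Field K] [LinearOrder K]

/-- The position, along a line of slope `m`, of the cell of `p` in the grid of cells given by `f`
and `g`, where `g` takes values below `r`: it grows by at least one from each cell that the line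
meets to the next. -/
def cellKey (f g : K → ℕ) (r : ℕ) (m : K) (p : K × K) : ℕ :=
  f p.1 + if 0 ≤ m then g p.2 else r - g p.2

/-- The line of an incidence together with the key of its cell. -/
def incidenceKey (f g : K → ℕ) (r : ℕ) (v : (K × K) × (K × K)) : (K × K) × ℕ :=
  (v.1, cellKey f g r v.1.1 v.2)

lemma card_image_incidenceKey_le (L : Finset (K × K)) {P Q : Finset K} {f g : K → ℕ} {r : ℕ}
    (hfr : ∀ s ∈ P, f s < r) (hgr : ∀ z ∈ Q, g z < r) :
    #((incidences L P Q).image (incidenceKey f g r)) ≤ #L * (2 * r) := by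
  rw [← card_range (2 * r), ← card_product]
  refine card_le_card (image_subset_iff.mpr ?_)
  rintro ⟨l, p⟩ hv
  obtain ⟨hl, hpP, hpQ, -⟩ := mem_incidences.mp hv
  have := hfr _ hpP
  have := hgr _ hpQ
  refine mem_product.mpr ⟨hl, mem_range.mpr ?_⟩
  simp only [incidenceKey, cellKey]
  split_ifs <;> lia

variable [IsStrictOrderedRing K]

lemma cells_eq_of_cellKey_eq {f g : K → ℕ} (hf : Monotone f) (hg : Monotone g) {r : ℕ}
    {l p q : K × K} (hp : p.2 = l.1 * p.1 + l.2) (hq : q.2 = l.1 * q.1 + l.2)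
    (hpr : g p.2 < r) (hqr : g q.2 < r) (hkey : cellKey f g r l.1 p = cellKey f g r l.1 q) :
    f p.1 = f q.1 ∧ g p.2 = g q.2 := by
  wlog hpq : p.1 ≤ q.1 generalizing p q
  · exact (this hq hp hqr hpr hkey.symm (le_of_not_ge hpq)).imp Eq.symm Eq.symm
  have hfpq := hf hpq
  unfold cellKey at hkey
  split_ifs at hkey with hm
  · have hgpq : g p.2 ≤ g q.2 := hg (by rw [hp, hq]; gcongr)
    lia
  · have hgqp : g q.2 ≤ g p.2 := hg (by rw [hp, hq]; nlinarith)
    lia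

-- Two distinct points of a line determine it, so a collision is determined by its two points.
lemma card_collisions_incidenceKey_le (L : Finset (K × K)) {P Q : Finset K} {f g : K → ℕ} {r : ℕ}
    (hf : Monotone f) (hg : Monotone g) (hgr : ∀ z ∈ Q, g z < r) :
    #(collisions (incidences L P Q) (incidenceKey f g r)) ≤
      #(cellPairs P f) * #(cellPairs Q g) := by
  rw [← card_product]
  refine card_le_card_of_injOn (fun w ↦ ((w.1.2.1, w.2.2.1), (w.1.2.2, w.2.2.2))) ?_ ?_
  · rintro ⟨⟨l, p⟩, ⟨l', q⟩⟩ hw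
    simp only [mem_coe, mem_collisions, mem_incidences, incidenceKey, Prod.mk.injEq] at hw
    obtain ⟨⟨-, hpP, hpQ, hp⟩, ⟨-, hqP, hqQ, hq⟩, -, rfl, hpq⟩ := hw
    have hcells := cells_eq_of_cellKey_eq hf hg hp hq (hgr _ hpQ) (hgr _ hqQ) hpq
    simp only [cellPairs, coe_product, coe_filter, mem_product, Set.mem_prod, Set.mem_ofPred_eq]
    exact ⟨⟨⟨hpP, hqP⟩, hcells.1⟩, ⟨hpQ, hqQ⟩, hcells.2⟩
  · rintro ⟨⟨l, p⟩, ⟨l', q⟩⟩ hw ⟨⟨l₁, p₁⟩, ⟨l₁', q₁⟩⟩ hw₁ heq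
    simp only [mem_coe, mem_collisions, mem_incidences, incidenceKey, Prod.mk.injEq]
      at hw hw₁ heq
    obtain ⟨⟨-, -, -, hp⟩, ⟨-, -, -, hq⟩, hne, rfl, -⟩ := hw
    obtain ⟨⟨-, -, -, hp₁⟩, ⟨-, -, -, hq₁⟩, -, rfl, -⟩ := hw₁
    obtain rfl : p = p₁ := Prod.ext heq.1.1 heq.2.1
    obtain rfl : q = q₁ := Prod.ext heq.1.2 heq.2.2
    have hpq : p ≠ q := fun h ↦ hne (by rw [h])
    rw [line_eq_of_two_points hpq hp hq hp₁ hq₁]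

lemma card_incidences_le {L : Finset (K × K)} {P Q : Finset K} {r : ℕ} (hr : 0 < r)
    (hrP : r ≤ #P) (hrQ : r ≤ #Q) (hL : #P ^ 2 * #Q ^ 2 ≤ r ^ 3 * #L) :
    #(incidences L P Q) ≤ 6 * r * #L := by
  obtain ⟨f, hf, hfr, hfP⟩ := exists_monotone_card_cellPairs_le hr hrP
  obtain ⟨g, hg, hgr, hgQ⟩ := exists_monotone_card_cellPairs_le hr hrQ
  have hpairs : #(cellPairs P f) * #(cellPairs Q g) ≤ 4 * r * #L := by
    refine Nat.le_of_mul_le_mul_right (?_ : _ * r ^ 2 ≤ _ * r ^ 2) (by positivity)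
    calc #(cellPairs P f) * #(cellPairs Q g) * r ^ 2
        = (#(cellPairs P f) * r) * (#(cellPairs Q g) * r) := by ring
      _ ≤ (2 * #P ^ 2) * (2 * #Q ^ 2) := by gcongr
      _ = 4 * (#P ^ 2 * #Q ^ 2) := by ring
      _ ≤ 4 * (r ^ 3 * #L) := by gcongr
      _ = 4 * r * #L * r ^ 2 := by ring
  calc #(incidences L P Q)
      ≤ #((incidences L P Q).image (incidenceKey f g r)) +
          #(collisions (incidences L P Q) (incidenceKey f g r)) :=
        card_le_card_image_add_card_collisions _ _
    _ ≤ #L * (2 * r) + #(cellPairs P f) * #(cellPairs Q g) :=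
        add_le_add (card_image_incidenceKey_le L hfr hgr)
          (card_collisions_incidenceKey_le L hf hg hgr)
    _ ≤ #L * (2 * r) + 4 * r * #L := by gcongr
    _ = 6 * r * #L := by ring

lemma card_linearTriples_le {B : Finset K} (hB : 0 ∉ B) {r : ℕ} (hr : 0 < r) (hrB : r ≤ #B)
    (hBr : #(B / B) ^ 2 ≤ r ^ 3) {α β : K} (hα : α ≠ 0) (hβ : β ≠ 0) :
    #(linearTriples B α β) ≤ 6 * r * #B := by
  set L := (B ×ˢ B).image (Prod.map (β * ·) (α * ·)) with hLdef
  have hL : #L = #B * #B := by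
    rw [hLdef, card_image_of_injective _ (Prod.map_injective.mpr
      ⟨mul_right_injective₀ hβ, mul_right_injective₀ hα⟩), card_product]
  have hinc : #(incidences L (B / B) B) ≤ 6 * r * #L := by
    refine card_incidences_le hr (hrB.trans (card_le_card_div_self₀ hB)) hrB ?_
    rw [hL, ← sq]
    gcongr
  refine Nat.le_of_mul_le_mul_left (?_ : #B * _ ≤ #B * _) (hr.trans_le hrB)
  calc #B * #(linearTriples B α β)
      ≤ #(incidences L (B / B) B) := card_mul_card_linearTriples_le_card_incidences hB hα hβ
    _ ≤ 6 * r * #L := hinc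
    _ = #B * (6 * r * #B) := by rw [hL]; ring

end OrderedIncidences

section DilatedSums

variable {K : Type*} [Field K] {ι : Type*}

/-- The determinant of two plane vectors. -/
def cross (u w : K × K) : K := u.1 * w.2 - u.2 * w.1

lemma mul_cross_add_mul_cross_eq {u₁ u₂ w₁ w₂ : K × K} {x y z t : K}
    (h : x • u₁ + y • u₂ = z • w₁ + t • w₂) :
    x * cross u₁ w₂ + y * cross u₂ w₂ = z * cross w₁ w₂ := by
  have h₁ : x * u₁.1 + y * u₂.1 = z * w₁.1 + t * w₂.1 := congrArg Prod.fst h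
  have h₂ : x * u₁.2 + y * u₂.2 = z * w₁.2 + t * w₂.2 := congrArg Prod.snd h
  unfold cross
  linear_combination w₂.2 * h₁ - w₂.1 * h₂

lemma eq_and_eq_of_smul_add_smul_eq {u w : K × K} (huw : cross u w ≠ 0) {x y z t : K}
    (h : x • u + y • w = z • u + t • w) : x = z ∧ y = t := by
  have h₁ : x * u.1 + y * w.1 = z * u.1 + t * w.1 := congrArg Prod.fst h
  have h₂ : x * u.2 + y * w.2 = z * u.2 + t * w.2 := congrArg Prod.snd h
  constructor <;> refine mul_right_cancel₀ huw ?_ <;> unfold cross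
  · linear_combination w.2 * h₁ - w.1 * h₂
  · linear_combination u.1 * h₂ - u.2 * h₁

/-- The sum of the vectors `v i` and `v j` dilated by `x` and `y`, where `w = ((i, j), (x, y))`. -/
def dilatedSum (v : ι → K × K) (w : (ι × ι) × (K × K)) : K × K :=
  w.2.1 • v w.1.1 + w.2.2 • v w.1.2

variable [DecidableEq K]

/-- The quadruples of scalars in `B` witnessing a coincidence between a combination of `u₁, u₂` and
a combination of `w₁, w₂`. -/
def coincidences (B : Finset K) (u₁ u₂ w₁ w₂ : K × K) : Finset ((K × K) × (K × K)) :=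
  {q ∈ (B ×ˢ B) ×ˢ (B ×ˢ B) | q.1.1 • u₁ + q.1.2 • u₂ = q.2.1 • w₁ + q.2.2 • w₂}

lemma card_coincidences_swap (B : Finset K) (u₁ u₂ w₁ w₂ : K × K) :
    #(coincidences B u₁ u₂ w₂ w₁) = #(coincidences B u₁ u₂ w₁ w₂) := by
  refine card_equiv ((Equiv.refl _).prodCongr (Equiv.prodComm _ _)) fun q ↦ ?_
  simp only [coincidences, mem_filter, mem_product, Equiv.prodCongr_apply, Equiv.coe_refl,
    Equiv.coe_prodComm, Prod.map_fst, Prod.map_snd, id_eq, Prod.fst_swap, Prod.snd_swap,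
    add_comm (q.2.1 • w₂)]
  tauto

lemma card_coincidences_le {B : Finset K} {T : ℕ}
    (hT : ∀ α β : K, α ≠ 0 → β ≠ 0 → #(linearTriples B α β) ≤ T) {u₁ u₂ w₁ w₂ : K × K}
    (hu₁ : cross u₁ w₂ ≠ 0) (hu₂ : cross u₂ w₂ ≠ 0) (hw : cross w₁ w₂ ≠ 0) :
    #(coincidences B u₁ u₂ w₁ w₂) ≤ T := by
  refine le_trans ?_ (hT _ _ (div_ne_zero hu₁ hw) (div_ne_zero hu₂ hw))
  refine card_le_card_of_injOn (fun q ↦ (q.1.1, q.1.2, q.2.1)) ?_ ?_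
  · rintro ⟨⟨x, y⟩, ⟨z, t⟩⟩ hq
    simp only [coincidences, coe_filter, mem_product, Set.mem_ofPred_eq] at hq
    obtain ⟨⟨⟨hx, hy⟩, hz, -⟩, heq⟩ := hq
    simp only [linearTriples, coe_filter, mem_product, Set.mem_ofPred_eq]
    refine ⟨⟨hx, hy, hz⟩, ?_⟩
    field_simp
    linear_combination -mul_cross_add_mul_cross_eq heq
  · rintro ⟨⟨x, y⟩, ⟨z, t⟩⟩ hq ⟨⟨x', y'⟩, ⟨z', t'⟩⟩ hq' hxyz
    simp only [coincidences, coe_filter, Set.mem_ofPred_eq, Prod.mk.injEq] at hq hq' hxyz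
    obtain ⟨rfl, rfl, rfl⟩ := hxyz
    rw [(eq_and_eq_of_smul_add_smul_eq hw (hq.2.symm.trans hq'.2)).2]

/-- The sums `x • v i + y • v j` with `i ∈ C₁`, `j ∈ C₂` and dilation factors `x, y ∈ B`. -/
def dilatedSums (v : ι → K × K) (B : Finset K) (C₁ C₂ : Finset ι) : Finset (K × K) :=
  ((C₁ ×ˢ C₂) ×ˢ (B ×ˢ B)).image (dilatedSum v)

section Collisions

variable {v : ι → K × K} {B : Finset K} {C₁ C₂ : Finset ι} {T : ℕ}

-- One of the vectors `v k`, `v l` differs from both `v i` and `v j`; eliminating it leaves a linear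
-- equation in three unknowns.
lemma card_coincidences_le_of_disjoint (hC : Disjoint C₁ C₂)
    (hv : (C₁ ∪ C₂ : Set ι).Pairwise fun i j ↦ cross (v i) (v j) ≠ 0)
    (hT : ∀ α β : K, α ≠ 0 → β ≠ 0 → #(linearTriples B α β) ≤ T)
    {i j k l : ι} (hi : i ∈ C₁) (hj : j ∈ C₂) (hk : k ∈ C₁) (hl : l ∈ C₂)
    (hne : (i, j) ≠ (k, l)) :
    #(coincidences B (v i) (v j) (v k) (v l)) ≤ T := by
  have hdisj := disjoint_iff_ne.mp hC
  by_cases hjl : j = l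
  · have hik : i ≠ k := fun hik ↦ hne (by rw [hik, hjl])
    rw [← card_coincidences_swap]
    exact card_coincidences_le hT (hv (.inl hi) (.inl hk) hik)
      (hv (.inr hj) (.inl hk) (hdisj k hk j hj).symm)
      (hv (.inr hl) (.inl hk) (hdisj k hk l hl).symm)
  · exact card_coincidences_le hT (hv (.inl hi) (.inr hl) (hdisj i hi l hl))
      (hv (.inr hj) (.inr hl) hjl) (hv (.inl hk) (.inr hl) (hdisj k hk l hl))

lemma card_collisions_fiber_le_card_coincidences [DecidableEq ι] (i j k l : ι) :
    #{p ∈ collisions ((C₁ ×ˢ C₂) ×ˢ (B ×ˢ B)) (dilatedSum v) |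
        (p.1.1, p.2.1) = ((i, j), (k, l))} ≤
      #(coincidences B (v i) (v j) (v k) (v l)) := by
  refine card_le_card_of_injOn (fun p ↦ (p.1.2, p.2.2)) ?_ ?_
  · rintro ⟨⟨⟨i', j'⟩, q⟩, ⟨⟨k', l'⟩, q'⟩⟩ hp
    simp only [coe_filter, mem_collisions, mem_product, Set.mem_ofPred_eq, Prod.mk.injEq] at hp
    obtain ⟨⟨⟨-, hq⟩, ⟨-, hq'⟩, -, heq⟩, ⟨rfl, rfl⟩, rfl, rfl⟩ := hp
    simp only [coincidences, coe_filter, mem_product, Set.mem_ofPred_eq]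
    exact ⟨⟨hq, hq'⟩, heq⟩
  · rintro ⟨⟨ij, q⟩, ⟨kl, q'⟩⟩ hp ⟨⟨ij₁, q₁⟩, ⟨kl₁, q₁'⟩⟩ hp₁ heq
    simp only [coe_filter, Set.mem_ofPred_eq, Prod.mk.injEq] at hp hp₁ heq
    rw [hp.2.1, hp.2.2, hp₁.2.1, hp₁.2.2, heq.1, heq.2]

lemma card_collisions_dilatedSum_le (hC : Disjoint C₁ C₂)
    (hv : (C₁ ∪ C₂ : Set ι).Pairwise fun i j ↦ cross (v i) (v j) ≠ 0)
    (hT : ∀ α β : K, α ≠ 0 → β ≠ 0 → #(linearTriples B α β) ≤ T) :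
    #(collisions ((C₁ ×ˢ C₂) ×ˢ (B ×ˢ B)) (dilatedSum v)) ≤
      T * (#C₁ * #C₂ * (#C₁ * #C₂ - 1)) := by
  classical
  rw [← card_product, Nat.mul_sub_one, ← offDiag_card]
  refine card_le_mul_card_image_of_maps_to (f := fun p ↦ (p.1.1, p.2.1)) ?_ T ?_
  · rintro ⟨⟨⟨i, j⟩, x, y⟩, ⟨⟨k, l⟩, z, t⟩⟩ hp
    simp only [mem_collisions, mem_product] at hp
    obtain ⟨⟨⟨hi, hj⟩, -⟩, ⟨⟨hk, hl⟩, -⟩, hne, heq⟩ := hp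
    simp only [mem_offDiag, mem_product]
    refine ⟨⟨hi, hj⟩, ⟨hk, hl⟩, fun hijkl ↦ hne ?_⟩
    obtain ⟨rfl, rfl⟩ := Prod.mk.inj hijkl
    have hij := hv (.inl hi) (.inr hj) (disjoint_iff_ne.mp hC i hi j hj)
    obtain ⟨rfl, rfl⟩ := eq_and_eq_of_smul_add_smul_eq hij heq
    rfl
  · rintro ⟨⟨i, j⟩, ⟨k, l⟩⟩ hijkl
    simp only [mem_offDiag, mem_product] at hijkl
    obtain ⟨⟨hi, hj⟩, ⟨hk, hl⟩, hne⟩ := hijkl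
    exact (card_collisions_fiber_le_card_coincidences i j k l).trans
      (card_coincidences_le_of_disjoint hC hv hT hi hj hk hl hne)

lemma card_mul_card_mul_sq_le_two_mul_card_dilatedSums (hC : Disjoint C₁ C₂)
    (hv : (C₁ ∪ C₂ : Set ι).Pairwise fun i j ↦ cross (v i) (v j) ≠ 0)
    (hT : ∀ α β : K, α ≠ 0 → β ≠ 0 → #(linearTriples B α β) ≤ T)
    (hCT : 2 * (#C₁ * #C₂ - 1) * T ≤ #B ^ 2) :
    #C₁ * #C₂ * #B ^ 2 ≤ 2 * #(dilatedSums v B C₁ C₂) := by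
  have hhalf : 2 * #(collisions ((C₁ ×ˢ C₂) ×ˢ (B ×ˢ B)) (dilatedSum v)) ≤
      #C₁ * #C₂ * #B ^ 2 :=
    calc 2 * #(collisions ((C₁ ×ˢ C₂) ×ˢ (B ×ˢ B)) (dilatedSum v))
        ≤ 2 * (T * (#C₁ * #C₂ * (#C₁ * #C₂ - 1))) := by
          gcongr; exact card_collisions_dilatedSum_le hC hv hT
      _ = #C₁ * #C₂ * (2 * (#C₁ * #C₂ - 1) * T) := by ring
      _ ≤ #C₁ * #C₂ * #B ^ 2 := by gcongr
  have hcount := card_le_card_image_add_card_collisions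
    ((C₁ ×ˢ C₂) ×ˢ (B ×ˢ B)) (dilatedSum v)
  rw [← dilatedSums, card_product, card_product, card_product, ← sq] at hcount
  lia

end Collisions

end DilatedSums

section Slopes

variable {K : Type*} [Field K]

/-- The vector of slope `m` whose first coordinate is `a m`. -/
def slopeVector (a : K → K) (m : K) : K × K := (a m, a m * m)

lemma cross_slopeVector_ne_zero {a : K → K} {i j : K} (hi : a i ≠ 0) (hj : a j ≠ 0)
    (hij : i ≠ j) : cross (slopeVector a i) (slopeVector a j) ≠ 0 := by
  have : cross (slopeVector a i) (slopeVector a j) = a i * a j * (j - i) := by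
    simp only [cross, slopeVector]
    ring
  rw [this]
  exact mul_ne_zero (mul_ne_zero hi hj) (sub_ne_zero.mpr hij.symm)

variable [DecidableEq K]

lemma exists_denominator {A : Finset K} (hA : 0 ∉ A) :
    ∃ a : K → K, ∀ m ∈ A / A, a m ∈ A ∧ a m * m ∈ A := by
  have hex : ∀ m ∈ A / A, ∃ b, b ∈ A ∧ b * m ∈ A := by
    intro m hm
    obtain ⟨x, hx, y, hy, rfl⟩ := mem_div.mp hm
    exact ⟨y, hy, by rwa [mul_div_cancel₀ x (ne_of_mem_of_not_mem hy hA)]⟩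
  choose! a ha using hex
  exact ⟨a, ha⟩

lemma dilatedSums_slopeVector_subset {A B R C₁ C₂ : Finset K} {a : K → K} (hBA : B ⊆ A)
    (hC₁ : C₁ ⊆ R) (hC₂ : C₂ ⊆ R) (haA : ∀ m ∈ R, a m ∈ A ∧ a m * m ∈ A) :
    dilatedSums (slopeVector a) B C₁ C₂ ⊆ (A * A + A * A) ×ˢ (A * A + A * A) := by
  refine image_subset_iff.mpr ?_
  rintro ⟨⟨i, j⟩, x, y⟩ hw
  simp only [mem_product] at hw
  obtain ⟨⟨hi, hj⟩, hx, hy⟩ := hw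
  obtain ⟨hi₁, hi₂⟩ := haA i (hC₁ hi)
  obtain ⟨hj₁, hj₂⟩ := haA j (hC₂ hj)
  exact mem_product.mpr
    ⟨add_mem_add (mul_mem_mul (hBA hx) hi₁) (mul_mem_mul (hBA hy) hj₁),
      add_mem_add (mul_mem_mul (hBA hx) hi₂) (mul_mem_mul (hBA hy) hj₂)⟩

end Slopes

section Clusters

variable {K : Type*} [Field K] [LinearOrder K] {A B R : Finset K} {a : K → K} {h T : ℕ}

/-- The dilated sums of the slopes in the `c`-th pair of consecutive blocks of `R` of length `h`. -/
def clusterSums (a : K → K) (B R : Finset K) (h c : ℕ) : Finset (K × K) :=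
  dilatedSums (slopeVector a) B (block R h (2 * c)) (block R h (2 * c + 1))

lemma sq_mul_sq_le_two_mul_card_clusterSums (ha : ∀ m ∈ R, a m ≠ 0)
    (hT : ∀ α β : K, α ≠ 0 → β ≠ 0 → #(linearTriples B α β) ≤ T)
    (hhT : 2 * (h ^ 2 - 1) * T ≤ #B ^ 2) (hh : 0 < h) {c : ℕ} (hc : c < #R / (2 * h)) :
    h ^ 2 * #B ^ 2 ≤ 2 * #(clusterSums a B R h c) := by
  have hfit : (2 * c + 1 + 1) * h ≤ #R :=
    calc (2 * c + 1 + 1) * h = (c + 1) * (2 * h) := by ring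
      _ ≤ #R / (2 * h) * (2 * h) := by gcongr; exact hc
      _ ≤ #R := Nat.div_mul_le_self _ _
  have hcard₁ : #(block R h (2 * c)) = h :=
    card_block hh (le_trans (by gcongr; lia) hfit)
  have hcard₂ : #(block R h (2 * c + 1)) = h := card_block hh hfit
  have hdisj : Disjoint (block R h (2 * c)) (block R h (2 * c + 1)) :=
    disjoint_iff_ne.mpr fun i hi j hj ↦ (lt_of_mem_block (Nat.lt_succ_self _) hi hj).ne
  have hsub : (block R h (2 * c) ∪ block R h (2 * c + 1) : Set K) ⊆ R :=
    Set.union_subset (block_subset R h _) (block_subset R h _)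
  have hcross : (block R h (2 * c) ∪ block R h (2 * c + 1) : Set K).Pairwise
      fun i j ↦ cross (slopeVector a i) (slopeVector a j) ≠ 0 := fun i hi j hj ↦
    cross_slopeVector_ne_zero (ha i (hsub hi)) (ha j (hsub hj))
  have hmain := card_mul_card_mul_sq_le_two_mul_card_dilatedSums hdisj hcross hT
    (by rwa [hcard₁, hcard₂, ← sq])
  rwa [hcard₁, hcard₂, ← sq] at hmain

variable [IsStrictOrderedRing K]

lemma weighted_mean_mem_Ioo {p q i j : K} (hpq : 0 < p * q) (hij : i < j) :
    (p * i + q * j) / (p + q) ∈ Set.Ioo i j := by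
  rcases pos_and_pos_or_neg_and_neg_of_mul_pos hpq with ⟨hp, hq⟩ | ⟨hp, hq⟩
  · rw [Set.mem_Ioo, lt_div_iff₀ (by linarith), div_lt_iff₀ (by linarith)]
    constructor <;> nlinarith
  · rw [Set.mem_Ioo, lt_div_iff_of_neg (by linarith), div_lt_iff_of_neg (by linarith)]
    constructor <;> nlinarith

lemma exists_slope_mem_Ioo_of_mem_dilatedSums {C₁ C₂ : Finset K}
    (hB : ∀ x ∈ B, ∀ y ∈ B, 0 < x * y) (ha : ∀ i ∈ C₁, ∀ j ∈ C₂, 0 < a i * a j)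
    (hC : ∀ i ∈ C₁, ∀ j ∈ C₂, i < j) {u : K × K}
    (hu : u ∈ dilatedSums (slopeVector a) B C₁ C₂) :
    ∃ i ∈ C₁, ∃ j ∈ C₂, u.2 / u.1 ∈ Set.Ioo i j := by
  obtain ⟨⟨⟨i, j⟩, x, y⟩, hw, rfl⟩ := mem_image.mp hu
  simp only [mem_product] at hw
  obtain ⟨⟨hi, hj⟩, hx, hy⟩ := hw
  have hpos : 0 < (x * a i) * (y * a j) := by
    rw [mul_mul_mul_comm]
    exact mul_pos (hB x hx y hy) (ha i hi j hj)
  refine ⟨i, hi, j, hj, ?_⟩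
  simpa [dilatedSum, slopeVector, mul_assoc] using weighted_mean_mem_Ioo hpos (hC i hi j hj)

lemma exists_subset_card_le_two_mul_and_mul_pos {ι : Type*} (S : Finset ι) {f : ι → K}
    (hf : ∀ i ∈ S, f i ≠ 0) :
    ∃ T ⊆ S, #S ≤ 2 * #T ∧ ∀ i ∈ T, ∀ j ∈ T, 0 < f i * f j := by
  have hsplit := card_filter_add_card_filter_not (s := S) (fun i ↦ 0 < f i)
  have hneg : ∀ i ∈ {i ∈ S | ¬ 0 < f i}, f i < 0 := fun i hi ↦
    have ⟨hiS, hi₀⟩ := mem_filter.mp hi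
    lt_of_le_of_ne (not_lt.mp hi₀) (hf i hiS)
  rcases le_total #{i ∈ S | 0 < f i} #{i ∈ S | ¬ 0 < f i} with h | h
  · exact ⟨{i ∈ S | ¬ 0 < f i}, filter_subset _ _, by lia,
      fun i hi j hj ↦ mul_pos_of_neg_of_neg (hneg i hi) (hneg j hj)⟩
  · exact ⟨{i ∈ S | 0 < f i}, filter_subset _ _, by lia,
      fun i hi j hj ↦ mul_pos (mem_filter.mp hi).2 (mem_filter.mp hj).2⟩

-- The sums of a cluster have their slopes strictly between those of its two blocks.
lemma pairwise_disjoint_clusterSums (hB : ∀ x ∈ B, ∀ y ∈ B, 0 < x * y)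
    (ha : ∀ i ∈ R, ∀ j ∈ R, 0 < a i * a j) :
    Pairwise (Function.onFun Disjoint (clusterSums a B R h)) := by
  have hslope : ∀ c, ∀ u ∈ clusterSums a B R h c,
      ∃ i ∈ block R h (2 * c), ∃ j ∈ block R h (2 * c + 1), u.2 / u.1 ∈ Set.Ioo i j :=
    fun c u hu ↦ exists_slope_mem_Ioo_of_mem_dilatedSums hB
      (fun i hi j hj ↦ ha i (block_subset R h _ hi) j (block_subset R h _ hj))
      (fun i hi j hj ↦ lt_of_mem_block (Nat.lt_succ_self _) hi hj) hu
  rw [pairwise_disjoint_on]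
  intro c d hcd
  rw [disjoint_left]
  intro u huc hud
  obtain ⟨-, -, j, hj, -, huj⟩ := hslope c u huc
  obtain ⟨i, hi, -, -, hiu, -⟩ := hslope d u hud
  exact lt_asymm huj ((lt_of_mem_block (by lia) hj hi).trans hiu)

lemma card_div_mul_sq_mul_sq_le (hBA : B ⊆ A) (hB : ∀ x ∈ B, ∀ y ∈ B, 0 < x * y)
    (haA : ∀ m ∈ R, a m ∈ A ∧ a m * m ∈ A) (ha : ∀ i ∈ R, ∀ j ∈ R, 0 < a i * a j)
    (hT : ∀ α β : K, α ≠ 0 → β ≠ 0 → #(linearTriples B α β) ≤ T)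
    (hhT : 2 * (h ^ 2 - 1) * T ≤ #B ^ 2) (hh : 0 < h) :
    #R / (2 * h) * (h ^ 2 * #B ^ 2) ≤ 2 * #(A * A + A * A) ^ 2 := by
  have ha₀ : ∀ m ∈ R, a m ≠ 0 := fun m hm ↦ left_ne_zero_of_mul (ha m hm m hm).ne'
  have hunion : (range (#R / (2 * h))).biUnion (clusterSums a B R h) ⊆
      (A * A + A * A) ×ˢ (A * A + A * A) :=
    biUnion_subset.mpr fun c _ ↦ dilatedSums_slopeVector_subset hBA
      (block_subset R h _) (block_subset R h _) haA
  calc #R / (2 * h) * (h ^ 2 * #B ^ 2)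
      = ∑ _c ∈ range (#R / (2 * h)), h ^ 2 * #B ^ 2 := by simp
    _ ≤ ∑ c ∈ range (#R / (2 * h)), 2 * #(clusterSums a B R h c) :=
        sum_le_sum fun c hc ↦
          sq_mul_sq_le_two_mul_card_clusterSums ha₀ hT hhT hh (mem_range.mp hc)
    _ = 2 * #((range (#R / (2 * h))).biUnion (clusterSums a B R h)) := by
        rw [← mul_sum, card_biUnion fun c _ d _ hcd ↦ pairwise_disjoint_clusterSums hB ha hcd]
    _ ≤ 2 * #((A * A + A * A) ×ˢ (A * A + A * A)) := by gcongr
    _ = 2 * #(A * A + A * A) ^ 2 := by rw [card_product, sq]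

end Clusters

section Parameters

lemma exists_le_pow_and_pow_le {n k : ℕ} (hn : 0 < n) (hk : k ≠ 0) :
    ∃ r, 0 < r ∧ n ≤ r ^ k ∧ r ^ k ≤ 2 ^ k * n := by
  set s := Nat.nthRoot k n
  have hs : 1 ≤ s := (Nat.le_nthRoot_iff hk).mpr (by rwa [one_pow])
  refine ⟨s + 1, s.succ_pos, (Nat.lt_pow_nthRoot_add_one hk n).le, ?_⟩
  calc (s + 1) ^ k ≤ (2 * s) ^ k := by gcongr; lia
    _ = 2 ^ k * s ^ k := mul_pow 2 s k
    _ ≤ 2 ^ k * n := by gcongr; exact Nat.pow_nthRoot_le (.inl hk)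

lemma exists_mul_sq_le_and_le_mul_sq {b m : ℕ} (hm : 0 < m) :
    ∃ h, 0 < h ∧ b ≤ 4 * m * h ^ 2 ∧ (h = 1 ∨ m * h ^ 2 ≤ b) := by
  have hlt : b < m * (Nat.sqrt (b / m) + 1) ^ 2 := by
    rw [mul_comm, ← Nat.div_lt_iff_lt_mul hm]
    exact Nat.lt_succ_sqrt' _
  have hle : m * Nat.sqrt (b / m) ^ 2 ≤ b :=
    (Nat.mul_le_mul_left m (Nat.sqrt_le' _)).trans (Nat.mul_div_le b m)
  rcases (Nat.sqrt (b / m)).eq_zero_or_pos with hs | hs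
  · rw [hs] at hlt
    exact ⟨1, one_pos, by lia, .inl rfl⟩
  · refine ⟨Nat.sqrt (b / m), hs, ?_, .inr hle⟩
    calc b ≤ m * (Nat.sqrt (b / m) + 1) ^ 2 := hlt.le
      _ ≤ m * (2 * Nat.sqrt (b / m)) ^ 2 := by gcongr; lia
      _ = 4 * m * Nat.sqrt (b / m) ^ 2 := by ring

end Parameters

section SumProduct

variable {K : Type*} [Field K] [LinearOrder K] [IsStrictOrderedRing K] {A B : Finset K} {r : ℕ}

lemma exists_block_length (hB : 0 ∉ B) (hr : 0 < r) (hBr : #(B / B) ^ 2 ≤ r ^ 3) :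
    ∃ h T, 0 < h ∧ #B ≤ 48 * r * h ^ 2 ∧ (h = 1 ∨ 2 * h ≤ #B / 2) ∧
      (∀ α β : K, α ≠ 0 → β ≠ 0 → #(linearTriples B α β) ≤ T) ∧
      2 * (h ^ 2 - 1) * T ≤ #B ^ 2 := by
  obtain ⟨h, hh, hBh, hhB⟩ := exists_mul_sq_le_and_le_mul_sq (b := #B) (m := 12 * r) (by lia)
  rcases hhB with rfl | hhB
  · exact ⟨1, #(B ×ˢ B ×ˢ B), one_pos, by lia, .inl rfl, fun _ _ _ _ ↦ card_filter_le _ _,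
      by simp⟩
  · have hrB : r ≤ #B := by nlinarith [Nat.one_le_pow 2 h hh]
    refine ⟨h, 6 * r * #B, hh, by lia, .inr ?_,
      fun α β hα hβ ↦ card_linearTriples_le hB hr hrB hBr hα hβ, ?_⟩
    · have : h ≤ r * h ^ 2 := by nlinarith
      lia
    · calc 2 * (h ^ 2 - 1) * (6 * r * #B) ≤ 2 * h ^ 2 * (6 * r * #B) := by gcongr; lia
        _ = 12 * r * h ^ 2 * #B := by ring
        _ ≤ #B * #B := by gcongr
        _ = #B ^ 2 := (sq _).symm

lemma card_div_sq_mul_card_pow_five_le (hA : 0 ∉ A) (hA₃ : 3 ≤ #(A / A)) (hr : 0 < r)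
    (hAr : #(A / A) ^ 2 ≤ r ^ 3) :
    #(A / A) ^ 2 * #A ^ 5 ≤ 3 * 2 ^ 17 * r * #(A * A + A * A) ^ 4 := by
  have hA₀ : ∀ x ∈ A, x ≠ 0 := fun x hx ↦ ne_of_mem_of_not_mem hx hA
  obtain ⟨a, haA⟩ := exists_denominator hA
  obtain ⟨B, hBA, hB, hBpos⟩ := exists_subset_card_le_two_mul_and_mul_pos A (f := id) hA₀
  obtain ⟨R, hRA, hR, hRpos⟩ := exists_subset_card_le_two_mul_and_mul_pos (A / A)
    fun m hm ↦ hA₀ _ (haA m hm).1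
  obtain ⟨h, T, hh, hBh, hhB, hT, hhT⟩ := exists_block_length (fun h ↦ hA (hBA h)) hr
    ((Nat.pow_le_pow_left (card_le_card (div_subset_div hBA hBA)) 2).trans hAr)
  have hclusters := card_div_mul_sq_mul_sq_le hBA hBpos (fun m hm ↦ haA m (hRA hm)) hRpos hT hhT hh
  set q := #R / (2 * h)
  set D := #(A * A + A * A)
  have hRq : #R ≤ 4 * h * q := by
    have hBcard := (card_le_card hBA).trans (card_le_card_div_self₀ hA)
    have hq : 1 ≤ q := (Nat.one_le_div_iff (by lia)).mpr (by lia)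
    have hlt : #R < 2 * h * (q + 1) := Nat.lt_mul_div_succ #R (by lia)
    nlinarith
  have hD : #(A / A) * h * #B ^ 2 ≤ 16 * D ^ 2 :=
    calc #(A / A) * h * #B ^ 2 ≤ 2 * (4 * h * q) * h * #B ^ 2 := by gcongr; lia
      _ = 8 * (q * (h ^ 2 * #B ^ 2)) := by ring
      _ ≤ 8 * (2 * D ^ 2) := by gcongr
      _ = 16 * D ^ 2 := by ring
  calc #(A / A) ^ 2 * #A ^ 5 ≤ #(A / A) ^ 2 * (2 * #B) ^ 5 := by gcongr
    _ = 2 ^ 5 * #(A / A) ^ 2 * #B ^ 4 * #B := by ring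
    _ ≤ 2 ^ 5 * #(A / A) ^ 2 * #B ^ 4 * (48 * r * h ^ 2) := by gcongr
    _ = 2 ^ 5 * 48 * r * (#(A / A) * h * #B ^ 2) ^ 2 := by ring
    _ ≤ 2 ^ 5 * 48 * r * (16 * D ^ 2) ^ 2 := by gcongr
    _ = 3 * 2 ^ 17 * r * D ^ 4 := by ring

lemma card_pow_mul_card_div_pow_le (hA : 0 ∉ A) :
    #A ^ 15 * #(A / A) ^ 4 ≤ 2 ^ 60 * #(A * A + A * A) ^ 12 := by
  obtain rfl | hne := A.eq_empty_or_nonempty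
  · simp
  have hAN := card_le_card_div_self₀ hA
  have hDpos : 0 < #(A * A + A * A) := ((hne.mul hne).add (hne.mul hne)).card_pos
  have hNpos : 0 < #(A / A) := (hne.div hne).card_pos
  set N := #(A / A)
  set D := #(A * A + A * A)
  rcases lt_or_ge N 3 with hN | hN
  · calc #A ^ 15 * N ^ 4 ≤ 2 ^ 15 * 2 ^ 4 := by gcongr <;> lia
      _ ≤ 2 ^ 60 * 1 := by norm_num
      _ ≤ 2 ^ 60 * D ^ 12 := by gcongr; exact Nat.one_le_pow _ _ hDpos
  obtain ⟨r, hr, hNr, hrN⟩ := exists_le_pow_and_pow_le (pow_pos hNpos 2) three_ne_zero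
  refine Nat.le_of_mul_le_mul_left (?_ : N ^ 2 * _ ≤ N ^ 2 * _) (by positivity)
  calc N ^ 2 * (#A ^ 15 * N ^ 4) = (N ^ 2 * #A ^ 5) ^ 3 := by ring
    _ ≤ (3 * 2 ^ 17 * r * D ^ 4) ^ 3 :=
        Nat.pow_le_pow_left (card_div_sq_mul_card_pow_five_le hA hN hr hNr) 3
    _ = 27 * 2 ^ 51 * D ^ 12 * r ^ 3 := by ring
    _ ≤ 27 * 2 ^ 51 * D ^ 12 * (2 ^ 3 * N ^ 2) := by gcongr
    _ = 27 * 2 ^ 54 * (N ^ 2 * D ^ 12) := by ring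
    _ ≤ 2 ^ 60 * (N ^ 2 * D ^ 12) := by gcongr; norm_num
    _ = N ^ 2 * (2 ^ 60 * D ^ 12) := by ring

theorem stmt_1_general (hA : 0 ∉ A) :
    1 / 32 * (#A : ℝ) ^ (5 / 4 : ℝ) * (#(A / A) : ℝ) ^ (1 / 3 : ℝ) ≤ #(A * A + A * A) := by
  have hnat : (#A : ℝ) ^ 15 * (#(A / A) : ℝ) ^ 4 ≤ 2 ^ 60 * (#(A * A + A * A) : ℝ) ^ 12 :=
    mod_cast card_pow_mul_card_div_pow_le hA
  have hA₁₂ : ((#A : ℝ) ^ (5 / 4 : ℝ)) ^ 12 = (#A : ℝ) ^ 15 := by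
    rw [← Real.rpow_mul_natCast (by positivity), ← Real.rpow_natCast]
    norm_num
  have hN₁₂ : ((#(A / A) : ℝ) ^ (1 / 3 : ℝ)) ^ 12 = (#(A / A) : ℝ) ^ 4 := by
    rw [← Real.rpow_mul_natCast (by positivity), ← Real.rpow_natCast]
    norm_num
  refine le_of_pow_le_pow_left₀ (n := 12) (by norm_num) (by positivity) ?_
  rw [mul_pow, mul_pow, hA₁₂, hN₁₂]
  linarith

end SumProduct

theorem stmt_1 :
    ∃ c : ℝ, 0 < c ∧
      ∀ A : Finset ℝ, (0 : ℝ) ∉ A → 2 ≤ A.card →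
        c * (A.card : ℝ) ^ ((5 : ℝ) / 4) * ((A / A).card : ℝ) ^ ((1 : ℝ) / 3)
          ≤ ((A * A + A * A).card : ℝ) :=
  ⟨1 / 32, by norm_num, fun _ hA _ ↦ stmt_1_general hA⟩
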